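/- Let (Ω, μ) and (Δ, ν) be measure spaces, let X be a Banach space over 𝕜, let {f_α}_{α∈Ω} be a family of (not necessarily bounded) linear functionals on X, and let {ω_β}_{β∈Δ} ⊆ X. Fix x ∈ X and a real constant A > 0 with |f_α(ω_β)| ≤ A for all α ∈ Ω, β ∈ Δ. Assume the map α ↦ f_α(x) is integrable on (Ω, μ), the map β ↦ g_β(x) is integrable on (Δ, ν), and for every α ∈ Ω the map β ↦ g_β(x) f_α(ω_β) is integrable on (Δ, ν) with f_α(x) = ∫_Δ g_β(x) f_α(ω_β) dν(β). Then ∫_Ω |f_α(x)| dμ(α) ≤ A · μ({α ∈ Ω : f_α(x) ≠ 0}) · ∫_Δ |g_β(x)| dν(β), where the right-hand side is interpreted in the extended nonnegative reals (the inequality holding trivially if μ({α : f_α(x) ≠ 0}) = ∞). -/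

import Mathlib

open MeasureTheory
open scoped ENNReal

/-!
Applying `f_α` to the reconstruction of `x` exhibits `θ_f x` as the image of `β ↦ g_β(x)` under an
integral operator with kernel `f_α(ω_β)`. A kernel bounded by `A` maps `L¹` to `L^∞` with norm at
most `A`, and a bounded function has `L¹` norm at most its bound times the measure of its support.
-/

section SupportBound

variable {Ω : Type*} [MeasurableSpace Ω] {μ : Measure Ω}

theorem lintegral_le_mul_measure_support {h : Ω → ℝ≥0∞} {C : ℝ≥0∞} (hC : ∀ᵐ α ∂μ, h α ≤ C) :
    ∫⁻ α, h α ∂μ ≤ C * μ h.support :=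
  calc
    ∫⁻ α, h α ∂μ = ∫⁻ α, h.support.indicator h α ∂μ := by rw [Set.indicator_support]
    _ ≤ ∫⁻ α, h.support.indicator (fun _ ↦ C) α ∂μ :=
      lintegral_mono_ae <| hC.mono fun _ hα ↦ Set.indicator_le_indicator hα
    _ ≤ C * μ h.support := lintegral_indicator_const_le _ C

theorem lintegral_enorm_le_mul_measure_support {E : Type*} [TopologicalSpace E]
    [ENormedAddMonoid E] {F : Ω → E} {C : ℝ≥0∞} (hC : ∀ᵐ α ∂μ, ‖F α‖ₑ ≤ C) :
    ∫⁻ α, ‖F α‖ₑ ∂μ ≤ C * μ F.support := by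
  have support_enorm : (fun α ↦ ‖F α‖ₑ).support = F.support :=
    Function.support_comp_eq _ enorm_eq_zero F
  simpa only [support_enorm] using lintegral_le_mul_measure_support hC

end SupportBound

section BoundedKernel

variable {𝕜 E Δ : Type*} [NormedField 𝕜] [NormedAddCommGroup E] [NormedSpace 𝕜 E]
  [NormedSpace ℝ E] [MeasurableSpace Δ] {ν : Measure Δ} {c : Δ → 𝕜} {A : ℝ}

theorem enorm_integral_smul_le_of_norm_le {k : Δ → E} (hk : ∀ᵐ β ∂ν, ‖k β‖ ≤ A) :
    ‖∫ β, c β • k β ∂ν‖ₑ ≤ ENNReal.ofReal A * ∫⁻ β, ‖c β‖ₑ ∂ν :=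
  calc
    ‖∫ β, c β • k β ∂ν‖ₑ ≤ ∫⁻ β, ‖c β • k β‖ₑ ∂ν := enorm_integral_le_lintegral_enorm _
    _ ≤ ∫⁻ β, ENNReal.ofReal A * ‖c β‖ₑ ∂ν := by
      refine lintegral_mono_ae (hk.mono fun β hβ ↦ ?_)
      rw [enorm_smul, mul_comm, ← ofReal_norm (k β)]
      gcongr
    _ = ENNReal.ofReal A * ∫⁻ β, ‖c β‖ₑ ∂ν := lintegral_const_mul' _ _ ENNReal.ofReal_ne_top

theorem unbounded_one_schauder_FI_general [CompleteSpace E] {Ω : Type*} [MeasurableSpace Ω]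
    {μ : Measure Ω} {F : Ω → E} {k : Ω → Δ → E}
    (hk : ∀ᵐ α ∂μ, ∀ᵐ β ∂ν, ‖k α β‖ ≤ A)
    (hF : ∀ᵐ α ∂μ, Integrable (fun β ↦ c β • k α β) ν ∧ F α = ∫ β, c β • k α β ∂ν) :
    ∫⁻ α, ‖F α‖ₑ ∂μ ≤ ENNReal.ofReal A * μ F.support * ∫⁻ β, ‖c β‖ₑ ∂ν := by
  have sup_bound : ∀ᵐ α ∂μ, ‖F α‖ₑ ≤ ENNReal.ofReal A * ∫⁻ β, ‖c β‖ₑ ∂ν := by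
    filter_upwards [hk, hF] with α hkα ⟨_, hFα⟩
    exact hFα ▸ enorm_integral_smul_le_of_norm_le hkα
  rw [mul_right_comm]
  exact lintegral_enorm_le_mul_measure_support sup_bound

end BoundedKernel

/-- Inequality (FI): `∫ |f_α(x)| dμ ≤ A · μ(supp θ_f x) · ∫ |g_β(x)| dν`,
the right-hand side interpreted in the extended nonnegative reals. -/
theorem unbounded_one_schauder_FI
    {𝕜 X Ω Δ : Type*} [RCLike 𝕜]
    [NormedAddCommGroup X] [NormedSpace 𝕜 X] [CompleteSpace X]
    [MeasurableSpace Ω] [MeasurableSpace Δ]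
    (μ : Measure Ω) (ν : Measure Δ)
    (f : Ω → X →ₗ[𝕜] 𝕜) (g : Δ → X →ₗ[𝕜] 𝕜)
    (ω : Δ → X) (x : X)
    (A : ℝ) (hA : 0 < A)
    (hfω : ∀ α β, ‖f α (ω β)‖ ≤ A)
    (hfint : Integrable (fun α => f α x) μ)
    (hgint : Integrable (fun β => g β x) ν)
    (hrecf : ∀ α, Integrable (fun β => g β x * f α (ω β)) ν ∧
      f α x = ∫ β, g β x * f α (ω β) ∂ν) :
    ENNReal.ofReal (∫ α, ‖f α x‖ ∂μ) ≤
      ENNReal.ofReal A * μ {α | f α x ≠ 0} * ENNReal.ofReal (∫ β, ‖g β x‖ ∂ν) := by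
  rw [ofReal_integral_norm_eq_lintegral_enorm hfint, ofReal_integral_norm_eq_lintegral_enorm hgint]
  exact unbounded_one_schauder_FI_general (.of_forall fun α ↦ .of_forall (hfω α)) (.of_forall hrecf)
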